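/- arXiv:1808.02869 — 2 statements merged into one kernel-verified Lean document; each statement's English description precedes it below -/
import Mathlib

section
/- Let q and r be positive integers, let σ be a permutation of {1,…,r}, and suppose (X_0,…,X_{q−1}) is a tuple of pairwise disjoint subsets of {1,…,r} whose union is {1,…,r} and which satisfies σ(X_{i+1 mod q}) = X_i for every 0 ≤ i ≤ q−1. Then q divides the length of every cycle of σ, i.e. q divides the cardinality of every orbit of the cyclic group ⟨σ⟩ acting on {1,…,r}. -/
/-- Let `q, r` be positive integers and `σ` a permutation of `{1,…,r}`.
If `(X_0, …, X_{q-1})` is a tuple of pairwise disjoint subsets of `{1,…,r}` whose union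
is everything and such that `σ (X_{i+1}) = X_i` (indices mod `q`) for all `i`, then `q`
divides the cardinality of every orbit of `⟨σ⟩` on `{1,…,r}`, i.e. the length of every
cycle of `σ`. -/
theorem stmt6 (q r : ℕ) (hq : 0 < q) (hr : 0 < r) (σ : Equiv.Perm (Fin r))
    (X : ZMod q → Finset (Fin r))
    (hdisj : ∀ i j : ZMod q, i ≠ j → Disjoint (X i) (X j))
    (hcover : ∀ a : Fin r, ∃ i : ZMod q, a ∈ X i)
    (hperm : ∀ i : ZMod q, (X (i + 1)).image σ = X i) :
    ∀ a : Fin r, q ∣ (Finset.univ.filter fun b => σ.SameCycle a b).card := by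
  intro a
  haveI : NeZero q := ⟨hq.ne'⟩
  set O := Finset.univ.filter fun b => σ.SameCycle a b with hO
  have hstep : ∀ i : ZMod q, (O ∩ X (i + 1)).card = (O ∩ X i).card := by
    intro i
    have himg : (O ∩ X (i + 1)).image σ = O ∩ X i := by
      rw [Finset.image_inter _ _ σ.injective, hperm]
      congr 1
      ext b
      simp only [hO, Finset.mem_image, Finset.mem_filter, Finset.mem_univ, true_and]
      constructor
      · rintro ⟨c, hc, rfl⟩
        exact Equiv.Perm.sameCycle_apply_right.2 hc
      · intro hb
        refine ⟨σ.symm b, ?_, by simp⟩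
        rw [← Equiv.Perm.sameCycle_apply_right]
        simpa using hb
    rw [← himg, Finset.card_image_of_injective _ σ.injective]
  have hnat : ∀ n : ℕ, (O ∩ X (n : ZMod q)).card = (O ∩ X 0).card := by
    intro n
    induction n with
    | zero => simp
    | succ k ih => rw [Nat.cast_succ, hstep, ih]
  have hconst : ∀ i : ZMod q, (O ∩ X i).card = (O ∩ X 0).card := by
    intro i
    rw [← hnat i.val, ZMod.natCast_zmod_val]
  have hU : O = Finset.univ.biUnion fun i : ZMod q => O ∩ X i := by
    ext b
    simp only [Finset.mem_biUnion, Finset.mem_univ, true_and, Finset.mem_inter]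
    constructor
    · intro hb
      obtain ⟨i, hi⟩ := hcover b
      exact ⟨i, hb, hi⟩
    · rintro ⟨_, hb, _⟩
      exact hb
  rw [hU, Finset.card_biUnion, Finset.sum_congr rfl fun i _ => hconst i]
  · simp [ZMod.card]
  · intro i _ j _ hij
    exact (hdisj i j hij).mono Finset.inter_subset_right Finset.inter_subset_right
end

section
/- Let q and r be positive integers, let σ be a permutation of {1,…,r}, and assume that q divides the cardinality of every orbit of the cyclic group ⟨σ⟩ acting on {1,…,r}. Then the number of tuples (X_0,…,X_{q−1}) of pairwise disjoint subsets of {1,…,r} whose union is {1,…,r} and which satisfy σ(X_{i+1 mod q}) = X_i for every 0 ≤ i ≤ q−1 is exactly q^s, where s is the number of orbits of ⟨σ⟩ on {1,…,r} (equivalently, the number of cycles of σ, counting fixed points as cycles of length 1). -/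
theorem inv_sameCycle {α β : Type*} (σ : Equiv.Perm α) (g : α → β)
    (hg : ∀ a, g (σ a) = g a) {a b : α} (h : σ.SameCycle a b) : g a = g b := by
  obtain ⟨n, rfl⟩ := h
  induction n using Int.induction_on with
  | zero => simp
  | succ n ih => rw [add_comm, zpow_add, zpow_one, Equiv.Perm.mul_apply, hg]; exact ih
  | pred n ih =>
    rw [ih, ← hg ((σ ^ (-(n:ℤ) - 1)) a), ← Equiv.Perm.mul_apply, ← zpow_one_add]
    congr 3
    ring

theorem dvd_of_zpow {r q : ℕ} (σ : Equiv.Perm (Fin r)) (a : Fin r)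
    (hd : q ∣ (Finset.univ.filter fun b => σ.SameCycle a b).card) (m : ℤ)
    (hm : (σ ^ m) a = a) : (q : ℤ) ∣ m := by
  classical
  have h1 : (Finset.univ.filter fun b => σ.SameCycle a b).card
      = Function.minimalPeriod (σ • ·) a := by
    rw [MulAction.minimalPeriod_eq_card, ← Set.toFinset_card]
    congr 1
    ext b
    simp only [Finset.mem_filter, Finset.mem_univ, true_and, Set.mem_toFinset,
      MulAction.mem_orbit_iff]
    constructor
    · rintro ⟨n, hn⟩
      exact ⟨⟨σ ^ n, n, rfl⟩, hn⟩
    · rintro ⟨⟨_, n, rfl⟩, hn⟩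
      exact ⟨n, hn⟩
  have h2 := (MulAction.zpow_smul_eq_iff_minimalPeriod_dvd (a := σ) (b := a) (n := m)).1 hm
  rw [← h1] at h2
  exact (Int.natCast_dvd_natCast.2 hd).trans h2


/-- Let `q, r` be positive integers and `σ` a permutation of `{1,…,r}`
such that `q` divides the cardinality of every orbit of `⟨σ⟩` (every cycle length of
`σ`, counting fixed points as cycles of length 1).  Then the number of tuples
`(X_0, …, X_{q-1})` of pairwise disjoint subsets of `{1,…,r}` covering `{1,…,r}` with
`σ (X_{i+1}) = X_i` (indices mod `q`) for all `i` is exactly `q ^ s`, where `s` is the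
number of orbits of `⟨σ⟩` on `{1,…,r}`. -/
theorem stmt7 (q r : ℕ) (hq : 0 < q) (hr : 0 < r) (σ : Equiv.Perm (Fin r))
    (hdvd : ∀ a : Fin r, q ∣ (Finset.univ.filter fun b => σ.SameCycle a b).card) :
    Set.ncard {X : ZMod q → Finset (Fin r) |
        (∀ i j : ZMod q, i ≠ j → Disjoint (X i) (X j)) ∧
        (∀ a : Fin r, ∃ i : ZMod q, a ∈ X i) ∧
        (∀ i : ZMod q, (X (i + 1)).image σ = X i)} =
      q ^ (Finset.univ.image fun a : Fin r =>
        Finset.univ.filter fun b => σ.SameCycle a b).card := by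

  classical
  have : NeZero q := ⟨hq.ne'⟩
  set orb : Fin r → Finset (Fin r) := fun a => Finset.univ.filter fun b => σ.SameCycle a b
    with horb
  have orb_eq : ∀ {a b}, σ.SameCycle a b → orb a = orb b := by
    intro a b h
    ext c
    simp only [horb, Finset.mem_filter, Finset.mem_univ, true_and]
    exact ⟨fun h' => h.symm.trans h', fun h' => h.trans h'⟩
  have hrep : ∀ c : (Finset.univ.image orb : Finset (Finset (Fin r))), ∃ a, orb a = c.1 := by
    rintro ⟨c, hc⟩
    simpa using hc
  choose rep hrep using hrep
  let cl : Fin r → (Finset.univ.image orb : Finset (Finset (Fin r))) := fun a =>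
    ⟨orb a, Finset.mem_image_of_mem _ (Finset.mem_univ a)⟩
  have cl_rep : ∀ c, cl (rep c) = c := fun c => Subtype.ext (hrep c)
  have cl_eq : ∀ {a b}, σ.SameCycle a b → cl a = cl b := fun h => Subtype.ext (orb_eq h)
  have sc_σ : ∀ a, σ.SameCycle (σ a) a := fun a => Equiv.Perm.SameCycle.symm ⟨1, by simp⟩
  have sc_rep : ∀ a, σ.SameCycle (rep (cl a)) a := by
    intro a
    have h : a ∈ orb (rep (cl a)) := by
      rw [hrep]
      simp [cl, horb, Equiv.Perm.SameCycle.refl]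
    simpa [horb] using h
  choose n hn using sc_rep
  have hn' : ∀ a, (((n (σ a) : ℤ)) : ZMod q) = n a + 1 := by
    intro a
    have h1 := hn (σ a)
    rw [cl_eq (sc_σ a)] at h1
    have h2 : (σ ^ (-n (σ a) + (1 + n a))) (rep (cl a)) = rep (cl a) := by
      rw [zpow_add, zpow_add, zpow_one, Equiv.Perm.mul_apply, Equiv.Perm.mul_apply, hn, zpow_neg,
        Equiv.Perm.inv_eq_iff_eq]
      exact h1.symm
    have h3 := dvd_of_zpow σ _ (hdvd _) _ h2
    have h4 := (ZMod.intCast_zmod_eq_zero_iff_dvd _ q).2 h3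
    push_cast at h4
    linear_combination -h4
  let Φ : (↥(Finset.univ.image orb : Finset (Finset (Fin r))) → ZMod q) →
      (ZMod q → Finset (Fin r)) :=
    fun h i => Finset.univ.filter fun a => h (cl a) - (n a : ZMod q) = i
  have hΦ : Function.Injective Φ := by
    intro h h' e
    funext c
    have h1 : rep c ∈ Φ h' (h (cl (rep c)) - (n (rep c) : ZMod q)) := by
      rw [← e]; simp [Φ]
    simp only [Φ, Finset.mem_filter, Finset.mem_univ, true_and, cl_rep] at h1
    linear_combination -h1
  have key : {X : ZMod q → Finset (Fin r) |
        (∀ i j : ZMod q, i ≠ j → Disjoint (X i) (X j)) ∧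
        (∀ a : Fin r, ∃ i : ZMod q, a ∈ X i) ∧
        (∀ i : ZMod q, (X (i + 1)).image σ = X i)} = Set.range Φ := by
    ext X
    constructor
    · rintro ⟨hd, hc, hs⟩
      have huniq : ∀ {a i j}, a ∈ X i → a ∈ X j → i = j := by
        intro a i j hi hj
        by_contra hne
        exact Finset.disjoint_left.1 (hd i j hne) hi hj
      choose f hf using hc
      have hfσ : ∀ a, f (σ a) = f a - 1 := by
        intro a
        apply huniq (hf (σ a))
        rw [← hs]
        apply Finset.mem_image_of_mem
        simpa using hf a
      have hinv : ∀ a b, σ.SameCycle a b → f a + n a = f b + n b := by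
        intro a b h
        refine inv_sameCycle σ (fun a => f a + (n a : ZMod q)) ?_ h
        intro a
        simp only [hfσ, hn']
        ring
      refine ⟨fun c => f (rep c) + n (rep c), ?_⟩
      funext i
      ext a
      have h1 := hinv _ a ⟨n a, hn a⟩
      simp only [Φ, Finset.mem_filter, Finset.mem_univ, true_and, h1, add_sub_cancel_right]
      exact ⟨fun h => h ▸ hf a, fun h => huniq (hf a) h⟩
    · rintro ⟨h, rfl⟩
      refine ⟨?_, ?_, ?_⟩
      · intro i j hij
        rw [Finset.disjoint_left]
        intro a ha hb
        simp only [Φ, Finset.mem_filter, Finset.mem_univ, true_and] at ha hb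
        exact hij (ha.symm.trans hb)
      · intro a
        exact ⟨_, by simp only [Φ, Finset.mem_filter, Finset.mem_univ, true_and]; rfl⟩
      · intro i
        have hb : ∀ b, σ b ∈ Φ h i ↔ b ∈ Φ h (i + 1) := by
          intro b
          simp only [Φ, Finset.mem_filter, Finset.mem_univ, true_and, hn', cl_eq (sc_σ b)]
          constructor <;> intro h <;> linear_combination h
        ext a
        rw [Finset.mem_image]
        constructor
        · rintro ⟨b, h1, rfl⟩
          exact (hb b).2 h1
        · intro ha
          exact ⟨σ.symm a, (hb _).1 (by simpa using ha), by simp⟩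
  rw [key, ← Set.image_univ, Set.ncard_image_of_injective _ hΦ, Set.ncard_univ,
    Nat.card_eq_fintype_card, Fintype.card_fun, ZMod.card, Fintype.card_coe]
end
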